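/- arXiv:1909.05081 — 2 statements merged into one kernel-verified Lean document; each statement's English description precedes it below -/
import Mathlib

section
/- Let B = (Σ, Q, Q0, Δ, Γ) be a nondeterministic Büchi automaton and let S = (Σ, 3^Q, (Q0, ∅), ndet(δ_B) ∪ ndet(γ_{2,1}), ndet(γ_B) ∪ ndet(γ_{2,1})) be the slim automaton constructed from B. Then L(S) ⊆ L(B): every infinite word that has an accepting run in S has an accepting run in B. (The proof interprets an accepting run of S on a word α as a finitely-rooted, finitely-branching, infinite forest of partial runs of B and applies Kőnig's Lemma to obtain an accepting run of B on α.) -/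
/-!
Let `p i = (S i, S' i)` be an accepting run of the slim automaton on `w`. Every `q ∈ S n` is the
endpoint of a partial run of `B` which takes an accepting transition strictly after any accepting
position `m` of `p` and no later than any subsequent accepting position `k < n`
(`exists_good_prefix`). This works because `S'` is emptied at each accepting position and afterwards
collects exactly the states reachable with an accepting transition since then; at the next
accepting position, for either kind of accepting transition, the new first component is
`δ_S(S') ∪ γ_S(S)` (`slim_step`). Since the first components are nonempty and `Q` is finite, Kőnig's
lemma (`exists_limit_path`) yields an infinite run all of whose prefixes are prefixes of such
partial runs. It has an accepting transition between any two accepting positions of `p`, hence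
infinitely many.
-/

/-- A nondeterministic Büchi automaton with a single initial state and
transition-based acceptance. -/
structure NBA (σ Q : Type) where
  init : Q
  trans : Q → σ → Q → Prop
  accept : Q → σ → Q → Prop

namespace NBA

variable {σ QA QB Q : Type}

/-- `r` is a run of `A` on the infinite word `w`. -/
def IsRun (A : NBA σ Q) (w : ℕ → σ) (r : ℕ → Q) : Prop :=
  r 0 = A.init ∧ ∀ i, A.trans (r i) (w i) (r (i + 1))

/-- The sequence `r` takes accepting transitions (on `w`) infinitely often. -/
def AccInf (A : NBA σ Q) (w : ℕ → σ) (r : ℕ → Q) : Prop :=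
  ∀ n, ∃ i, n ≤ i ∧ A.accept (r i) (w i) (r (i + 1))

/-- `r` is an accepting run of `A` on `w`. -/
def IsAccRun (A : NBA σ Q) (w : ℕ → σ) (r : ℕ → Q) : Prop :=
  A.IsRun w r ∧ A.AccInf w r

/-- The language of `A`: words with an accepting run. -/
def Lang (A : NBA σ Q) : Set (ℕ → σ) := {w | ∃ r, A.IsAccRun w r}

/-- The run of the duplicator (moving along `A`) induced by a strategy `τ`
(mapping finite histories of spoiler moves to duplicator states) against a
spoiler run `rB` on the word `w`. -/
def dupRun (A : NBA σ QA) (τ : List (σ × QB) → QA) (w : ℕ → σ) (rB : ℕ → QB) : ℕ → QA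
  | 0 => A.init
  | n + 1 => τ ((List.range (n + 1)).map fun i => (w i, rB (i + 1)))

/-- `A` simulates `B`: the duplicator, moving along `A`, has a strategy that
answers every spoiler run of `B` with legal transitions of `A` and wins every
play (his run of `A` is accepting, or the spoiler's run of `B` is not). -/
def Simulates (A : NBA σ QA) (B : NBA σ QB) : Prop :=
  ∃ τ : List (σ × QB) → QA,
    ∀ (w : ℕ → σ) (rB : ℕ → QB), B.IsRun w rB →
      (∀ i, A.trans (A.dupRun τ w rB i) (w i) (A.dupRun τ w rB (i + 1))) ∧
      (B.AccInf w rB → A.AccInf w (A.dupRun τ w rB))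

end NBA

/-- A nondeterministic Büchi automaton with a set of initial states. -/
structure NBAm (σ Q : Type) where
  init : Set Q
  trans : Q → σ → Q → Prop
  accept : Q → σ → Q → Prop

namespace NBAm

variable {σ Q : Type}

/-- `r` is a run of `B` on the infinite word `w`. -/
def IsRun (B : NBAm σ Q) (w : ℕ → σ) (r : ℕ → Q) : Prop :=
  r 0 ∈ B.init ∧ ∀ i, B.trans (r i) (w i) (r (i + 1))

/-- The run `r` takes accepting transitions (on `w`) infinitely often. -/
def AccInf (B : NBAm σ Q) (w : ℕ → σ) (r : ℕ → Q) : Prop :=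
  ∀ n, ∃ i, n ≤ i ∧ B.accept (r i) (w i) (r (i + 1))

/-- The language of `B`. -/
def Lang (B : NBAm σ Q) : Set (ℕ → σ) := {w | ∃ r, B.IsRun w r ∧ B.AccInf w r}

end NBAm

variable {σ Q : Type}

/-- Subset transition function `δ_S`. -/
def deltaS (B : NBAm σ Q) (S : Set Q) (a : σ) : Set Q := {q' | ∃ q ∈ S, B.trans q a q'}

/-- Accepting subset transition function `γ_S`. -/
def gammaS (B : NBAm σ Q) (S : Set Q) (a : σ) : Set Q := {q' | ∃ q ∈ S, B.accept q a q'}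

/-- The raw breakpoint transition function `δ_R`. -/
def rawB (B : NBAm σ Q) (p : Set Q × Set Q) (a : σ) : Set Q × Set Q :=
  (deltaS B p.1 a, deltaS B p.2 a ∪ gammaS B p.1 a)

/-- The breakpoint transition relation `ndet(δ_B)` (as a relation, since `δ_B`
is partial: it is undefined when the successor subset is empty). -/
def breakTrans (B : NBAm σ Q) (p : Set Q × Set Q) (a : σ) (p' : Set Q × Set Q) : Prop :=
  (rawB B p a).1 ≠ ∅ ∧
    (((rawB B p a).1 ≠ (rawB B p a).2 ∧ p' = rawB B p a) ∨
      ((rawB B p a).1 = (rawB B p a).2 ∧ p' = ((rawB B p a).1, (∅ : Set Q))))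

/-- The accepting breakpoint transitions `ndet(γ_B)`. -/
def breakAcc (B : NBAm σ Q) (p : Set Q × Set Q) (a : σ) (p' : Set Q × Set Q) : Prop :=
  (rawB B p a).1 ≠ ∅ ∧ (rawB B p a).1 = (rawB B p a).2 ∧ p' = ((rawB B p a).1, (∅ : Set Q))

/-- The (accepting) transitions `ndet(γ_{2,1})` promoting the second set of a
breakpoint state to the first. -/
def gamma21 (B : NBAm σ Q) (p : Set Q × Set Q) (a : σ) (p' : Set Q × Set Q) : Prop :=
  deltaS B p.2 a ∪ gammaS B p.1 a ≠ ∅ ∧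
    p' = (deltaS B p.2 a ∪ gammaS B p.1 a, (∅ : Set Q))

/-- The transitions `Δ_SB` from the subset part to the breakpoint part. -/
def transSB (B : NBAm σ Q) (S : Set Q) (a : σ) (p' : Set Q × Set Q) : Prop :=
  p'.2 = ∅ ∧ p'.1 ≠ ∅ ∧ p'.1 ⊆ deltaS B S a

/-- The limit-deterministic automaton
`A = (Σ, 2^Q ∪ 3^Q, Q0, ndet(δ_S) ∪ Δ_SB ∪ ndet(δ_B), ndet(γ_B))` obtained from
`B` by the combined subset and breakpoint construction. -/
def ldba (B : NBAm σ Q) : NBA σ (Set Q ⊕ Set Q × Set Q) where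
  init := Sum.inl B.init
  trans := fun x a y =>
    match x, y with
    | Sum.inl S, Sum.inl S' => S' = deltaS B S a
    | Sum.inl S, Sum.inr p' => transSB B S a p'
    | Sum.inr p, Sum.inr p' => breakTrans B p a p'
    | Sum.inr _, Sum.inl _ => False
  accept := fun x a y =>
    match x, y with
    | Sum.inr p, Sum.inr p' => breakAcc B p a p'
    | _, _ => False

/-- The slim automaton
`S = (Σ, 3^Q, (Q0,∅), ndet(δ_B) ∪ ndet(γ_{2,1}), ndet(γ_B) ∪ ndet(γ_{2,1}))`. -/
def slim (B : NBAm σ Q) : NBA σ (Set Q × Set Q) where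
  init := (B.init, (∅ : Set Q))
  trans := fun p a p' => breakTrans B p a p' ∨ gamma21 B p a p'
  accept := fun p a p' => breakAcc B p a p' ∨ gamma21 B p a p'

/-- Kőnig's lemma: a sequence of paths over a finite set has a limit path, every prefix of which is
shared with arbitrarily late paths of the sequence. -/
lemma exists_limit_path {Q : Type} [Finite Q] (x : ℕ → ℕ → Q) :
    ∃ r : ℕ → Q, ∀ N, ∃ n, N ≤ n ∧ ∀ i ≤ N, x n i = r i := by
  let : TopologicalSpace Q := ⊥
  have : DiscreteTopology Q := ⟨rfl⟩
  obtain ⟨r, φ, hφ, hr⟩ := CompactSpace.tendsto_subseq x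
  refine ⟨r, fun N => ?_⟩
  have h1 : ∀ i, ∀ᶠ n in Filter.atTop, x (φ n) i = r i := fun i => by
    have := (tendsto_pi_nhds.1 hr) i
    rw [nhds_discrete, Filter.tendsto_pure] at this
    exact this
  have h2 : ∀ᶠ n in Filter.atTop, ∀ i ∈ Set.Iic N, x (φ n) i = r i :=
    (Filter.eventually_all_finite (Set.finite_Iic N)).2 fun i _ => h1 i
  obtain ⟨n, hn, hN⟩ := (h2.and (Filter.eventually_ge_atTop N)).exists
  exact ⟨φ n, hN.trans (hφ.id_le n), fun i hi => hn i hi⟩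

/-- Shape of a slim transition: an accepting one, whether a breakpoint or a `γ_{2,1}`-transition,
moves to `(δ_S(S') ∪ γ_S(S), ∅)`; a non-accepting one is the raw breakpoint transition. -/
lemma slim_step {σ Q : Type} (B : NBAm σ Q) {p p' : Set Q × Set Q} {a : σ}
    (h : (slim B).trans p a p') :
    p'.1.Nonempty ∧
      (((slim B).accept p a p' ∧ p' = (deltaS B p.2 a ∪ gammaS B p.1 a, ∅)) ∨
        (¬ (slim B).accept p a p' ∧ p' = (deltaS B p.1 a, deltaS B p.2 a ∪ gammaS B p.1 a))) := by
  rw [Set.nonempty_iff_ne_empty]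
  by_cases hacc : (slim B).accept p a p'
  · have hp' : p'.1 ≠ ∅ ∧ p' = (deltaS B p.2 a ∪ gammaS B p.1 a, ∅) := by
      rcases hacc with ⟨h1, h2, rfl⟩ | ⟨h1, rfl⟩
      · refine ⟨h1, ?_⟩
        rw [h2]
        rfl
      · exact ⟨h1, rfl⟩
    exact ⟨hp'.1, Or.inl ⟨hacc, hp'.2⟩⟩
  · rcases h with ⟨h1, ⟨-, rfl⟩ | ⟨h2, h3⟩⟩ | h
    · exact ⟨h1, Or.inr ⟨hacc, rfl⟩⟩
    · exact absurd (Or.inl ⟨h1, h2, h3⟩) hacc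
    · exact absurd (Or.inr h) hacc

/-- `r`, up to position `n`, is a partial run of `B` on `w` with an accepting transition between any
two positions `m < k < n` of the set `A`: one at some `i` with `m < i ≤ k`. -/
def GoodPrefix {σ Q : Type} (B : NBAm σ Q) (w : ℕ → σ) (A : ℕ → Prop) (n : ℕ) (r : ℕ → Q) : Prop :=
  r 0 ∈ B.init ∧ (∀ i < n, B.trans (r i) (w i) (r (i + 1))) ∧
    ∀ m k, A m → A k → m < k → k < n →
      ∃ i, m < i ∧ i ≤ k ∧ B.accept (r i) (w i) (r (i + 1))

/-- A good prefix of length `n` extends by a transition of `B`, provided that, if `n` lies in `A`,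
the extended path has an accepting transition after each earlier position of `A`. -/
lemma GoodPrefix.extend {σ Q : Type} {B : NBAm σ Q} {w : ℕ → σ} {A : ℕ → Prop} {n : ℕ}
    {r : ℕ → Q} (h : GoodPrefix B w A n r) {q : Q} (hq : B.trans (r n) (w n) q)
    (hA : A n → B.accept (r n) (w n) q ∨
      ∀ m, A m → m < n → ∃ i, m < i ∧ i < n ∧ B.accept (r i) (w i) (r (i + 1))) :
    GoodPrefix B w A (n + 1) (Function.update r (n + 1) q) := by
  obtain ⟨h0, h1, h2⟩ := h
  have hle : ∀ i ≤ n, Function.update r (n + 1) q i = r i := fun i hi =>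
    Function.update_of_ne (by omega) _ _
  have hlast : Function.update r (n + 1) q (n + 1) = q := Function.update_self _ _ _
  refine ⟨by rwa [hle 0 (by omega)], fun i hi => ?_, fun m k hm hk hmk hkn => ?_⟩
  · rcases Nat.lt_succ_iff_lt_or_eq.1 hi with hi | rfl
    · rw [hle i (by omega), hle (i + 1) (by omega)]
      exact h1 i hi
    · rwa [hle i le_rfl, hlast]
  · rcases Nat.lt_succ_iff_lt_or_eq.1 hkn with hkn | rfl
    · obtain ⟨i, hi, hik, hi'⟩ := h2 m k hm hk hmk hkn
      refine ⟨i, hi, hik, ?_⟩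
      rwa [hle i (by omega), hle (i + 1) (by omega)]
    · rcases hA hk with hA | hA
      · exact ⟨k, hmk, le_rfl, by rwa [hle k le_rfl, hlast]⟩
      · obtain ⟨i, hi, hik, hi'⟩ := hA m hm hmk
        refine ⟨i, hi, hik.le, ?_⟩
        rwa [hle i (by omega), hle (i + 1) (by omega)]

/-- Every state in the first component of the `n`-th state of a slim run ends a good prefix; for
states in the second component the prefix can moreover be chosen with an accepting transition
after each earlier accepting position. -/
lemma exists_good_prefix {σ Q : Type} (B : NBAm σ Q)
    (hacc : ∀ q a q', B.accept q a q' → B.trans q a q') {w : ℕ → σ} {p : ℕ → Set Q × Set Q}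
    (hp : (slim B).IsRun w p) {A : ℕ → Prop}
    (hA : ∀ i, A i ↔ (slim B).accept (p i) (w i) (p (i + 1))) (n : ℕ) :
    (∀ q ∈ (p n).1, ∃ r, r n = q ∧ GoodPrefix B w A n r) ∧
    (∀ q ∈ (p n).2, ∃ r, r n = q ∧ GoodPrefix B w A n r ∧
      ∀ m, A m → m < n → ∃ i, m < i ∧ i < n ∧ B.accept (r i) (w i) (r (i + 1))) := by
  induction n with
  | zero =>
    rw [hp.1]
    refine ⟨fun q hq => ⟨fun _ => q, rfl, hq, fun i hi => ?_, fun m k _ _ _ hk => ?_⟩,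
      fun q hq => hq.elim⟩ <;> omega
  | succ n ih =>
    obtain ⟨ih1, ih2⟩ := ih
    -- A state of `δ_S(S') ∪ γ_S(S)` ends a good prefix even if `n` is an accepting position.
    have key : ∀ q ∈ deltaS B (p n).2 (w n) ∪ gammaS B (p n).1 (w n),
        ∃ r, r (n + 1) = q ∧ GoodPrefix B w A (n + 1) r ∧
          ∀ m, A m → m < n → ∃ i, m < i ∧ i < n + 1 ∧ B.accept (r i) (w i) (r (i + 1)) := by
      rintro q (⟨q₀, hq₀, ht⟩ | ⟨q₀, hq₀, ht⟩)
      · obtain ⟨r, rfl, hr, hr'⟩ := ih2 q₀ hq₀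
        refine ⟨_, Function.update_self _ _ _, hr.extend ht fun _ => Or.inr hr', fun m hm hmn => ?_⟩
        obtain ⟨i, hi, hin, h⟩ := hr' m hm hmn
        refine ⟨i, hi, by omega, ?_⟩
        rwa [Function.update_of_ne (by omega), Function.update_of_ne (by omega)]
      · obtain ⟨r, rfl, hr⟩ := ih1 q₀ hq₀
        refine ⟨_, Function.update_self _ _ _, hr.extend (hacc _ _ _ ht) fun _ => Or.inl ht,
          fun m hm hmn => ⟨n, hmn, by omega, ?_⟩⟩
        rwa [Function.update_self, Function.update_of_ne (by omega)]
    rcases (slim_step B (hp.2 n)).2 with ⟨_, he⟩ | ⟨hn, he⟩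
    · rw [he]
      refine ⟨fun q hq => ?_, fun q hq => hq.elim⟩
      obtain ⟨r, h1, h2, -⟩ := key q hq
      exact ⟨r, h1, h2⟩
    · rw [← hA] at hn
      rw [he]
      constructor
      · rintro q ⟨q₀, hq₀, ht⟩
        obtain ⟨r, rfl, hr⟩ := ih1 q₀ hq₀
        exact ⟨_, Function.update_self _ _ _, hr.extend ht fun h => absurd h hn⟩
      · intro q hq
        obtain ⟨r, h1, h2, h3⟩ := key q hq
        refine ⟨r, h1, h2, fun m hm hmn => h3 m hm ?_⟩
        have : m ≠ n := fun h => hn (h ▸ hm)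
        omega

/-- Every word accepted by the slim automaton is accepted by `B`:
`L(S) ⊆ L(B)`. -/
theorem slim_lang_subset {σ Q : Type} [Fintype σ] [Fintype Q] (B : NBAm σ Q)
    (hacc : ∀ q a q', B.accept q a q' → B.trans q a q') :
    (slim B).Lang ⊆ B.Lang := by
  rintro w ⟨p, hp, hinf⟩
  let A : ℕ → Prop := fun i => (slim B).accept (p i) (w i) (p (i + 1))
  have hx : ∀ n, ∃ r, GoodPrefix B w A (n + 1) r := fun n => by
    obtain ⟨q, hq⟩ := (slim_step B (hp.2 n)).1
    obtain ⟨r, -, hr⟩ := (exists_good_prefix B hacc hp (A := A) (fun _ => Iff.rfl) (n + 1)).1 q hq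
    exact ⟨r, hr⟩
  choose x hx using hx
  obtain ⟨r, hr⟩ := exists_limit_path x
  refine ⟨r, ⟨?_, fun i => ?_⟩, fun N => ?_⟩
  · obtain ⟨n, -, h⟩ := hr 0
    rw [← h 0 le_rfl]
    exact (hx n).1
  · obtain ⟨n, hn, h⟩ := hr (i + 1)
    rw [← h i (by omega), ← h (i + 1) le_rfl]
    exact (hx n).2.1 i (by omega)
  · obtain ⟨m, hm, hmA⟩ := hinf N
    obtain ⟨k, hk, hkA⟩ := hinf (m + 1)
    obtain ⟨n, hn, h⟩ := hr (k + 1)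
    obtain ⟨i, hi, hik, hi'⟩ := (hx n).2.2 m k hmA hkA (by omega) (by omega)
    refine ⟨i, by omega, ?_⟩
    rwa [← h i (by omega), ← h (i + 1) (by omega)]
end

section
/- In the winning strategy of the duplicator in the simulation game where the spoiler moves along the limit-deterministic automaton A and the duplicator moves along the slim automaton S (both constructed from an NBA B), the following invariant holds: if the spoiler's pebble is on a state whose first component is the set S_i ⊆ Q and the duplicator's pebble is on a state (T_i, T_i') ∈ 3^Q, then S_i ⊆ T_i at every round i of the play; moreover, between any two accepting transitions taken by the spoiler in the breakpoint part of A, the duplicator takes at least one accepting transition of S. -/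
variable {σ Q : Type}

attribute [local instance] Classical.propDecidable

/-- The first component of a state of the limit-deterministic automaton: the
subset of `Q` it tracks. -/
def fstComp {Q : Type} : Set Q ⊕ Set Q × Set Q → Set Q
  | Sum.inl S => S
  | Sum.inr p => p.1

/-- The (total version of the) breakpoint step `δ_B` used by the duplicator. -/
noncomputable def bStep {σ Q : Type} (B : NBAm σ Q) (p : Set Q × Set Q) (a : σ) :
    Set Q × Set Q :=
  if (rawB B p a).1 = (rawB B p a).2 then ((rawB B p a).1, (∅ : Set Q)) else rawB B p a

/-- The duplicator's move in the final phase: from his state `p`, reading `a`,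
he computes the `γ_{2,1}` successor `(T̄, ∅)` and plays it if the spoiler's new
first component `Sbar` satisfies `Sbar ⊆ T̄`; otherwise he plays `δ_B`. -/
noncomputable def dupMove {σ Q : Type} (B : NBAm σ Q) (p : Set Q × Set Q) (a : σ)
    (Sbar : Set Q) : Set Q × Set Q :=
  if deltaS B p.2 a ∪ gammaS B p.1 a ≠ ∅ ∧ Sbar ⊆ deltaS B p.2 a ∪ gammaS B p.1 a then
    (deltaS B p.2 a ∪ gammaS B p.1 a, (∅ : Set Q))
  else bStep B p a

/-- The run of the duplicator (moving along the slim automaton) produced by the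
winning strategy of the duplicator against a spoiler run `rA` of the
limit-deterministic automaton on the word `w`: while the spoiler uses
`ndet(δ_S)`-transitions or the `Δ_SB`-transition, the duplicator follows `δ_B`;
once the spoiler is in the breakpoint part, the duplicator plays `dupMove`. -/
noncomputable def stratRun {σ Q : Type} (B : NBAm σ Q) (w : ℕ → σ)
    (rA : ℕ → Set Q ⊕ Set Q × Set Q) : ℕ → Set Q × Set Q
  | 0 => (B.init, (∅ : Set Q))
  | n + 1 =>
    match rA n with
    | Sum.inl _ => bStep B (stratRun B w rA n) (w n)
    | Sum.inr _ => dupMove B (stratRun B w rA n) (w n) (fstComp (rA (n + 1)))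

theorem deltaS_mono {σ Q : Type} (B : NBAm σ Q) {S T : Set Q} (h : S ⊆ T) (a : σ) :
    deltaS B S a ⊆ deltaS B T a := fun _ ⟨q, hq, ht⟩ => ⟨q, h hq, ht⟩

theorem rawB_snd_mono {σ Q : Type} (B : NBAm σ Q) {p r : Set Q × Set Q} (h₁ : p.1 ⊆ r.1)
    (h₂ : p.2 ⊆ r.2) (a : σ) :
    deltaS B p.2 a ∪ gammaS B p.1 a ⊆ deltaS B r.2 a ∪ gammaS B r.1 a :=
  Set.union_subset_union (deltaS_mono B h₂ a) fun _ ⟨q, hq, ht⟩ => ⟨q, h₁ hq, ht⟩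

theorem bStep_fst {σ Q : Type} (B : NBAm σ Q) (p : Set Q × Set Q) (a : σ) :
    (bStep B p a).1 = deltaS B p.1 a := by
  unfold bStep
  split_ifs <;> rfl

theorem breakTrans_fst {σ Q : Type} {B : NBAm σ Q} {p p' : Set Q × Set Q} {a : σ}
    (h : breakTrans B p a p') : p'.1 = deltaS B p.1 a := by
  rcases h with ⟨_, ⟨_, rfl⟩ | ⟨_, rfl⟩⟩ <;> rfl

theorem breakTrans_snd {σ Q : Type} {B : NBAm σ Q} {p p' : Set Q × Set Q} {a : σ}
    (h : breakTrans B p a p') : p'.2 ⊆ deltaS B p.2 a ∪ gammaS B p.1 a := by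
  rcases h with ⟨_, ⟨_, rfl⟩ | ⟨_, rfl⟩⟩
  · exact subset_rfl
  · exact Set.empty_subset _

theorem ldba_fst_subset {σ Q : Type} {B : NBAm σ Q} {x y : Set Q ⊕ Set Q × Set Q} {a : σ}
    (h : (ldba B).trans x a y) : fstComp y ⊆ deltaS B (fstComp x) a := by
  rcases x with S | p <;> rcases y with S' | p'
  · exact (show S' = deltaS B S a from h).subset
  · exact (show transSB B S a p' from h).2.2
  · exact (show False from h).elim
  · exact (breakTrans_fst (show breakTrans B p a p' from h)).subset

theorem strat_fst_subset {σ Q : Type} {B : NBAm σ Q} {w : ℕ → σ}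
    {rA : ℕ → Set Q ⊕ Set Q × Set Q} (hrun : (ldba B).IsRun w rA) (i : ℕ) :
    fstComp (rA i) ⊆ (stratRun B w rA i).1 := by
  induction i with
  | zero => rw [hrun.1]; exact subset_rfl
  | succ n ih =>
    have h := (ldba_fst_subset (hrun.2 n)).trans (deltaS_mono B ih (w n))
    rw [← bStep_fst] at h
    rw [stratRun]
    split
    · exact h
    · unfold dupMove
      split_ifs with hc
      · exact hc.2
      · exact h

/-- In the breakpoint part the duplicator either takes an accepting transition or moves by `rawB`.
Nonemptiness of `deltaS B p.1 a` is needed because `bStep` is total while `δ_B` is undefined on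
an empty successor subset. -/
theorem dupMove_cases {σ Q : Type} (B : NBAm σ Q) (p : Set Q × Set Q) (a : σ) (S : Set Q)
    (hne : deltaS B p.1 a ≠ ∅) :
    (slim B).accept p a (dupMove B p a S) ∨ dupMove B p a S = rawB B p a := by
  unfold dupMove
  split_ifs with hc
  · exact Or.inl (Or.inr ⟨hc.1, rfl⟩)
  · unfold bStep
    split_ifs with hb
    · exact Or.inl (Or.inl ⟨hne, hb, rfl⟩)
    · exact Or.inr rfl

theorem stratRun_succ_of_inr {σ Q : Type} (B : NBAm σ Q) (w : ℕ → σ)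
    {rA : ℕ → Set Q ⊕ Set Q × Set Q} {n : ℕ} {p : Set Q × Set Q} (h : rA n = Sum.inr p) :
    stratRun B w rA (n + 1) = dupMove B (stratRun B w rA n) (w n) (fstComp (rA (n + 1))) := by
  rw [stratRun, h]

/-- If the spoiler is at a state `(S, ∅)` in round `n` and the duplicator takes no accepting
transition in rounds `n, …, n + d - 1`, then in round `n + d` the spoiler is still in the breakpoint
part and his second component is contained in the duplicator's. -/
theorem strat_snd_subset {σ Q : Type} {B : NBAm σ Q} {w : ℕ → σ}
    {rA : ℕ → Set Q ⊕ Set Q × Set Q} (hrun : (ldba B).IsRun w rA) {n : ℕ} {S : Set Q}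
    (hn : rA n = Sum.inr (S, ∅)) (d : ℕ)
    (hno : ∀ m, n ≤ m → m < n + d →
      ¬ (slim B).accept (stratRun B w rA m) (w m) (stratRun B w rA (m + 1))) :
    ∃ p, rA (n + d) = Sum.inr p ∧ p.2 ⊆ (stratRun B w rA (n + d)).2 := by
  induction d with
  | zero => exact ⟨_, hn, Set.empty_subset _⟩
  | succ d ih =>
    obtain ⟨p, hp, hsub⟩ := ih fun m h₁ h₂ => hno m h₁ (by omega)
    have htr := hrun.2 (n + d)
    have hfst := strat_fst_subset hrun (n + d)
    have hna := hno (n + d) (by omega) (by omega)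
    rw [stratRun_succ_of_inr B w hp] at hna
    rw [← add_assoc, stratRun_succ_of_inr B w hp]
    rw [hp] at htr hfst
    cases hq : rA (n + d + 1) with
    | inl S' =>
      rw [hq] at htr
      exact (show False from htr).elim
    | inr p' =>
      rw [hq] at htr hna
      have hb : breakTrans B p (w (n + d)) p' := htr
      have hne : deltaS B (stratRun B w rA (n + d)).1 (w (n + d)) ≠ ∅ := fun h0 =>
        hb.1 (Set.subset_eq_empty (deltaS_mono B hfst _) h0)
      refine ⟨p', rfl, ?_⟩
      rw [(dupMove_cases B _ _ _ hne).resolve_left hna]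
      exact (breakTrans_snd hb).trans (rawB_snd_mono B hfst hsub _)

/-- Along any play of the simulation game in which the spoiler
produces a run `rA` of the limit-deterministic automaton and the duplicator
follows his winning strategy (producing the run `stratRun B w rA` of the slim
automaton), (1) the first component of the spoiler's state is contained in the
first component of the duplicator's state at every round, and (2) between any
two accepting transitions of the spoiler (which are necessarily in the
breakpoint part) the duplicator takes at least one accepting transition of the
slim automaton. -/
theorem strategy_invariant {σ Q : Type} [Fintype σ] [Fintype Q] (B : NBAm σ Q)
    (hacc : ∀ q a q', B.accept q a q' → B.trans q a q')
    (w : ℕ → σ) (rA : ℕ → Set Q ⊕ Set Q × Set Q) (hrun : (ldba B).IsRun w rA) :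
    (∀ i, fstComp (rA i) ⊆ (stratRun B w rA i).1) ∧
    (∀ k l, k < l →
      (ldba B).accept (rA k) (w k) (rA (k + 1)) →
      (ldba B).accept (rA l) (w l) (rA (l + 1)) →
      ∃ m, k < m ∧ m ≤ l ∧
        (slim B).accept (stratRun B w rA m) (w m) (stratRun B w rA (m + 1))) := by
  refine ⟨strat_fst_subset hrun, fun k l hkl hk hl => ?_⟩
  by_contra! hno
  -- The spoiler's accepting transition in round `k` leads to a state with empty second component.
  obtain ⟨S, hS⟩ : ∃ S, rA (k + 1) = Sum.inr (S, ∅) := by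
    cases h₀ : rA k with
    | inl _ => rw [h₀] at hk; exact (show False from hk).elim
    | inr p =>
      cases h₁ : rA (k + 1) with
      | inl _ => rw [h₀, h₁] at hk; exact (show False from hk).elim
      | inr r =>
        rw [h₀, h₁] at hk
        have hb : breakAcc B p (w k) r := hk
        exact ⟨_, congrArg Sum.inr hb.2.2⟩
  obtain ⟨d, rfl⟩ : ∃ d, l = k + 1 + d := ⟨l - (k + 1), by omega⟩
  obtain ⟨p, hp, hsub⟩ := strat_snd_subset hrun hS d fun m h₁ h₂ => hno m (by omega) (by omega)
  have hfst := strat_fst_subset hrun (k + 1 + d)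
  apply hno (k + 1 + d) hkl le_rfl
  rw [stratRun_succ_of_inr B w hp]
  rw [hp] at hfst hl
  cases hq : rA (k + 1 + d + 1) with
  | inl _ => rw [hq] at hl; exact (show False from hl).elim
  | inr r =>
    rw [hq] at hl
    obtain ⟨hne, heq, rfl⟩ : breakAcc B p (w (k + 1 + d)) r := hl
    -- The spoiler's new first component equals the second component of `rawB`.
    have hin : (rawB B p (w (k + 1 + d))).1 ⊆
        deltaS B (stratRun B w rA (k + 1 + d)).2 (w (k + 1 + d)) ∪
          gammaS B (stratRun B w rA (k + 1 + d)).1 (w (k + 1 + d)) :=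
      heq.subset.trans (rawB_snd_mono B hfst hsub _)
    have hT : deltaS B (stratRun B w rA (k + 1 + d)).2 (w (k + 1 + d)) ∪
        gammaS B (stratRun B w rA (k + 1 + d)).1 (w (k + 1 + d)) ≠ ∅ := fun h0 =>
      hne (Set.subset_eq_empty hin h0)
    refine Or.inr ⟨hT, ?_⟩
    exact if_pos ⟨hT, hin⟩
end
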